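/- Let G be a finite simple graph on vertex set V and let B be a zero forcing set of G. Then for every A ∈ S(G), the nullity of A is at most the cardinality of B. -/

import Mathlib

/-- One step of the zero forcing color change rule: `B'` is obtained from `B` by adding
a vertex `w` which is the unique neighbor outside `B` of some vertex `v ∈ B`. -/
def ZFStep {V : Type*} [DecidableEq V] (G : SimpleGraph V) (B B' : Finset V) : Prop :=
  ∃ v ∈ B, ∃ w : V, w ∉ B ∧ G.Adj v w ∧ (∀ u : V, G.Adj v u → u ∉ B → u = w) ∧
    B' = insert w B

/-- `B` is a zero forcing set of `G` if repeated application of the color change rule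
starting from `B` colors all vertices black. -/
def IsZeroForcingSet {V : Type*} [Fintype V] [DecidableEq V]
    (G : SimpleGraph V) (B : Finset V) : Prop :=
  Relation.ReflTransGen (ZFStep G) B Finset.univ

/-!
If a null vector `x` of `A` vanishes on `B` and `v ∈ B` forces `w`, then `w` is the only index at
which both `A v u` and `x u` can be nonzero, so row `v` of `A *ᵥ x = 0` reads `A v w * x w = 0`.
Hence vanishing propagates along the forcing steps, and a null vector is determined by its values
on a zero forcing set.
-/

open scoped Matrix

theorem apply_eq_zero_of_mulVec_apply_eq_zero {m n R : Type*} [Fintype n]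
    [NonUnitalNonAssocSemiring R] [NoZeroDivisors R] {A : Matrix m n R} {x : n → R} {i : m} {j : n}
    (hx : (A *ᵥ x) i = 0) (hij : A i j ≠ 0) (hne : ∀ k, k ≠ j → A i k = 0 ∨ x k = 0) :
    x j = 0 := by
  have row_eq : (A *ᵥ x) i = A i j * x j :=
    Fintype.sum_eq_single j fun k hk => mul_eq_zero.mpr (hne k hk)
  exact (mul_eq_zero.mp (row_eq.symm.trans hx)).resolve_left hij

section Propagation

variable {V R : Type*} [Fintype V] [DecidableEq V] [NonUnitalNonAssocSemiring R] [NoZeroDivisors R]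
  {G : SimpleGraph V} {A : Matrix V V R} {x : V → R} {B C : Finset V}

theorem ZFStep.eq_zero_of_mulVec_eq_zero (hBC : ZFStep G B C)
    (hpat : ∀ i j, i ≠ j → (A i j ≠ 0 ↔ G.Adj i j)) (hx : A *ᵥ x = 0)
    (hB : ∀ u ∈ B, x u = 0) : ∀ u ∈ C, x u = 0 := by
  obtain ⟨v, hv, w, -, hvw, hunique, rfl⟩ := hBC
  have entry_or_coord_eq_zero (u : V) (huw : u ≠ w) : A v u = 0 ∨ x u = 0 := by
    by_cases hu : u ∈ B
    · exact .inr (hB u hu)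
    · have hvu : v ≠ u := ne_of_mem_of_not_mem hv hu
      exact .inl (not_ne_iff.mp fun h => huw (hunique u ((hpat v u hvu).mp h) hu))
  have hw : x w = 0 :=
    apply_eq_zero_of_mulVec_apply_eq_zero (congrFun hx v) ((hpat v w hvw.ne).mpr hvw)
      entry_or_coord_eq_zero
  exact (Finset.forall_mem_insert w B _).mpr ⟨hw, hB⟩

theorem eq_zero_of_reflTransGen_zfStep (hBC : Relation.ReflTransGen (ZFStep G) B C)
    (hpat : ∀ i j, i ≠ j → (A i j ≠ 0 ↔ G.Adj i j)) (hx : A *ᵥ x = 0)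
    (hB : ∀ u ∈ B, x u = 0) : ∀ u ∈ C, x u = 0 := by
  induction hBC with
  | refl => exact hB
  | tail _ hstep ih => exact hstep.eq_zero_of_mulVec_eq_zero hpat hx ih

theorem IsZeroForcingSet.eq_zero_of_mulVec_eq_zero (hB : IsZeroForcingSet G B)
    (hpat : ∀ i j, i ≠ j → (A i j ≠ 0 ↔ G.Adj i j)) (hx : A *ᵥ x = 0)
    (hxB : ∀ u ∈ B, x u = 0) : x = 0 :=
  funext fun u => eq_zero_of_reflTransGen_zfStep hB hpat hx hxB u (Finset.mem_univ u)

end Propagation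

theorem finrank_le_card_of_eq_zero_of_forall_mem {ι R : Type*} [Ring R] [StrongRankCondition R]
    (K : Submodule R (ι → R)) (s : Finset ι)
    (hs : ∀ x ∈ K, (∀ i ∈ s, x i = 0) → x = 0) : Module.finrank R K ≤ s.card := by
  let restrict : K →ₗ[R] (s → R) := LinearMap.funLeft R R Subtype.val ∘ₗ K.subtype
  have restrict_injective : Function.Injective restrict :=
    (injective_iff_map_eq_zero restrict).mpr fun x hx =>
      Subtype.ext (hs x x.2 fun i hi => congrFun hx ⟨i, hi⟩)
  calc
    Module.finrank R K ≤ Module.finrank R (s → R) :=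
      LinearMap.finrank_le_finrank_of_injective restrict_injective
    _ = s.card := by rw [Module.finrank_fintype_fun_eq_card, Fintype.card_coe]

theorem nullity_le_card_zero_forcing_set_general
    {V R : Type*} [Fintype V] [DecidableEq V] [CommRing R] [IsDomain R] (G : SimpleGraph V)
    (B : Finset V) (hB : IsZeroForcingSet G B) (A : Matrix V V R)
    (hpat : ∀ i j : V, i ≠ j → (A i j ≠ 0 ↔ G.Adj i j)) :
    Module.finrank R (LinearMap.ker A.mulVecLin) ≤ B.card :=
  finrank_le_card_of_eq_zero_of_forall_mem _ B fun _ hx =>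
    hB.eq_zero_of_mulVec_eq_zero hpat (LinearMap.mem_ker.mp hx)

/-- If `B` is a zero forcing set of `G` then the nullity of any `A ∈ S(G)` is at most
the cardinality of `B`. -/
theorem nullity_le_card_zero_forcing_set
    {V : Type*} [Fintype V] [DecidableEq V] (G : SimpleGraph V)
    (B : Finset V) (hB : IsZeroForcingSet G B)
    (A : Matrix V V ℂ) (hA : A.IsHermitian)
    (hpat : ∀ i j : V, i ≠ j → (A i j ≠ 0 ↔ G.Adj i j)) :
    Module.finrank ℂ (LinearMap.ker A.mulVecLin) ≤ B.card :=
  nullity_le_card_zero_forcing_set_general G B hB A hpat
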